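/- Let a_1, …, a_n ∈ ℤ^d be primitive integer vectors and let D ⊆ (0, ∞) be a dense subset of (0, ∞). Suppose b_1, …, b_n and c_1, …, c_n are real numbers such that P = ⋂_{i=1}^n {x ∈ ℝ^d : ⟨a_i, x⟩ ≤ b_i} and Q = ⋂_{i=1}^n {x ∈ ℝ^d : ⟨a_i, x⟩ ≤ c_i} are both compact with nonempty interior, that for every i one has b_i = max_{x∈P} ⟨a_i, x⟩ and c_i = max_{x∈Q} ⟨a_i, x⟩ (so each hyperplane {x : ⟨a_i, x⟩ = b_i} supports P and each {x : ⟨a_i, x⟩ = c_i} supports Q, i.e. each set F_i = P ∩ {x : ⟨a_i, x⟩ = b_i} is a nonempty face), and that L_{P+w}(s) = L_{Q+w}(s) for every w ∈ ℤ^d and every s ∈ D. Then b_i = c_i for all i; in particular P = Q. -/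

import Mathlib

open Set MeasureTheory Pointwise

/-- The set of integer lattice points in `ℝ^d` (as `Fin d → ℝ`). -/
def latticePts (d : ℕ) : Set (Fin d → ℝ) := {x | ∀ i, ∃ m : ℤ, x i = m}

/-- The real-parameter Ehrhart function: number of lattice points in `s • P`. -/
noncomputable def ehrhart {d : ℕ} (P : Set (Fin d → ℝ)) (s : ℝ) : ℕ :=
  ((s • P) ∩ latticePts d).ncard

/-- Translate of a set by a vector. -/
def translateSet {d : ℕ} (P : Set (Fin d → ℝ)) (v : Fin d → ℝ) : Set (Fin d → ℝ) :=
  (fun x => x + v) '' P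

/-- A polytope: convex hull of a nonempty finite set of points. -/
def IsPolytope {d : ℕ} (P : Set (Fin d → ℝ)) : Prop :=
  ∃ V : Finset (Fin d → ℝ), V.Nonempty ∧ P = convexHull ℝ (V : Set (Fin d → ℝ))

/-- A rational polytope: convex hull of a nonempty finite set of rational points. -/
def IsRationalPolytope {d : ℕ} (P : Set (Fin d → ℝ)) : Prop :=
  ∃ V : Finset (Fin d → ℝ), V.Nonempty ∧ (∀ v ∈ V, ∀ i, ∃ q : ℚ, v i = (q : ℝ)) ∧
    P = convexHull ℝ (V : Set (Fin d → ℝ))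

/-- Standard inner product on `Fin d → ℝ`. -/
def dotProd {d : ℕ} (a x : Fin d → ℝ) : ℝ := ∑ i, a i * x i

/-- A semi-rational polytope: a polytope expressible as a finite intersection of
half-spaces with integer normal vectors. -/
def IsSemiRationalPolytope {d : ℕ} (P : Set (Fin d → ℝ)) : Prop :=
  IsPolytope P ∧ ∃ (n : ℕ) (a : Fin n → Fin d → ℤ) (b : Fin n → ℝ),
    P = ⋂ i, {x : Fin d → ℝ | dotProd (fun j => (a i j : ℝ)) x ≤ b i}

theorem ehr_aux {d : ℕ} (D : Set ℝ) (hD : D ⊆ Set.Ioi (0 : ℝ))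
    (hDdense : Set.Ioi (0 : ℝ) ⊆ closure D) (P Q : Set (Fin d → ℝ))
    (hPc : IsCompact P) (hQc : IsCompact Q)
    (hehr : ∀ (w : Fin d → ℤ), ∀ s ∈ D,
      ehrhart (translateSet P (fun i => (w i : ℝ))) s =
      ehrhart (translateSet Q (fun i => (w i : ℝ))) s) : interior P ⊆ Q := by
  intro x hx
  by_contra hxQ
  have hU : IsOpen (interior P ∩ Qᶜ) := isOpen_interior.inter hQc.isClosed.isOpen_compl
  obtain ⟨ε, hε, hball⟩ := Metric.isOpen_iff.1 hU x ⟨hx, hxQ⟩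
  obtain ⟨R, hR⟩ := (hPc.union hQc).isBounded.exists_norm_le
  obtain ⟨N, hN⟩ := exists_nat_gt (2 * max R 0 + 1)
  have hR0 : 0 ≤ max R 0 := le_max_right _ _
  have hNpos : (0 : ℝ) < N := by linarith
  have hlt : 1 / ((N : ℝ) + ε) < 1 / N :=
    one_div_lt_one_div_of_lt hNpos (by linarith)
  have hmid : ((1 / ((N : ℝ) + ε) + 1 / N) / 2) ∈ closure D := by
    apply hDdense
    have : 0 < 1 / ((N : ℝ) + ε) := by positivity
    have : 0 < 1 / (N : ℝ) := by positivity
    show (0 : ℝ) < _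
    linarith
  obtain ⟨s, ⟨hs1, hs2⟩, hsD⟩ := mem_closure_iff.1 hmid (Ioo (1 / ((N : ℝ) + ε)) (1 / N)) isOpen_Ioo
    ⟨by linarith, by linarith⟩
  have hs : 0 < s := hD hsD
  obtain ⟨δ, hδ⟩ : ∃ δ, δ = 1 / s - N := ⟨_, rfl⟩
  have hδ0 : 0 < δ := by
    have := (lt_one_div hs hNpos).1 hs2
    linarith
  have hδε : δ < ε := by
    have := (one_div_lt (by positivity) hs).1 hs1
    linarith
  have hs' : s⁻¹ = N + δ := by rw [hδ]; simp
  let z : Fin d → ℤ := fun j => ⌊x j / δ⌋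
  let w : Fin d → ℤ := fun j => N * z j
  let p : Fin d → ℝ := fun j => s⁻¹ * z j - w j
  have hp : p ∈ Metric.ball x ε := by
    rw [Metric.mem_ball, dist_pi_lt_iff hε]
    intro j
    have h1 : p j = δ * ⌊x j / δ⌋ := by
      simp only [p, w, z, hs']; push_cast; ring
    have h2 : (⌊x j / δ⌋ : ℝ) * δ ≤ x j := (le_div_iff₀ hδ0).1 (Int.floor_le _)
    have h3 : x j < ((⌊x j / δ⌋ : ℝ) + 1) * δ := (div_lt_iff₀ hδ0).1 (Int.lt_floor_add_one _)
    rw [h1, Real.dist_eq, abs_lt]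
    constructor <;> nlinarith
  have hpP : p ∈ P := interior_subset (hball hp).1
  have hpQ : p ∉ Q := (hball hp).2
  have key : ∀ S : Set (Fin d → ℝ), S ⊆ P ∪ Q →
      ∀ y ∈ (s • translateSet S (fun i => (w i : ℝ))) ∩ latticePts d,
        y = (fun j => (z j : ℝ)) ∧ p ∈ S := by
    rintro S hS y ⟨⟨_, ⟨q, hq, rfl⟩, rfl⟩, hy⟩
    have hyz : (s • (q + fun i => (w i : ℝ))) = (fun j => (z j : ℝ)) := by
      funext j
      obtain ⟨m, hm⟩ := hy j
      simp only [Pi.smul_apply, Pi.add_apply, smul_eq_mul] at hm ⊢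
      have hzj : s * (p j + w j) = z j := by
        simp only [p]; field_simp; ring
      have hqn : |q j| ≤ max R 0 :=
        ((norm_le_pi_norm q j).trans (hR q (hS hq))).trans (le_max_left _ _)
      have hpn : |p j| ≤ max R 0 :=
        ((norm_le_pi_norm p j).trans (hR p (Or.inl hpP))).trans (le_max_left _ _)
      have hsN : s * N < 1 := by rwa [lt_div_iff₀ hNpos] at hs2
      have hb : |(m : ℝ) - z j| < 1 := by
        rw [← hm, ← hzj, ← mul_sub, abs_mul, abs_of_pos hs]
        have : |q j + w j - (p j + w j)| ≤ N := by
          rw [abs_le] at *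
          constructor <;> linarith
        nlinarith
      have : m = z j := by
        have : |m - z j| < 1 := by exact_mod_cast hb
        rw [Int.abs_lt_one_iff] at this
        omega
      rw [hm, this]
    refine ⟨hyz, ?_⟩
    have : p = q := by
      funext j
      have := congrFun hyz j
      simp only [Pi.smul_apply, Pi.add_apply, smul_eq_mul] at this
      simp only [p]
      rw [← this]
      field_simp
      ring
    rwa [this]
  have hQ0 : ehrhart (translateSet Q (fun i => (w i : ℝ))) s = 0 := by
    unfold ehrhart
    rw [Set.eq_empty_of_forall_notMem (fun y hy => hpQ (key Q subset_union_right y hy).2)]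
    simp
  have hP1 : ehrhart (translateSet P (fun i => (w i : ℝ))) s = 1 := by
    unfold ehrhart
    rw [Set.ncard_eq_one]
    refine ⟨fun j => (z j : ℝ), Set.Subset.antisymm
      (fun y hy => (key P subset_union_left y hy).1) ?_⟩
    rintro _ rfl
    refine ⟨⟨_, ⟨p, hpP, rfl⟩, ?_⟩, fun j => ⟨z j, rfl⟩⟩
    funext j
    simp only [Pi.smul_apply, Pi.add_apply, smul_eq_mul, p]
    field_simp
    ring
  have := hehr w s hsD
  omega

theorem conv_aux {d n : ℕ} (a : Fin n → Fin d → ℤ) (b : Fin n → ℝ) :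
    Convex ℝ (⋂ i, {x : Fin d → ℝ | dotProd (fun j => (a i j : ℝ)) x ≤ b i}) := by
  refine convex_iInter fun i => convex_halfSpace_le ⟨fun x y => ?_, fun r x => ?_⟩ _
  · simp [dotProd, mul_add, Finset.sum_add_distrib]
  · simp only [dotProd, Finset.mul_sum, Pi.smul_apply, smul_eq_mul]
    exact Finset.sum_congr rfl fun j _ => by ring

/-- recovering the right-hand sides of the supporting half-spaces of a
full-dimensional semi-rational polytope from the Ehrhart functions of its integer
translates, known only on a dense set of dilation parameters. -/
theorem stmt15 {d n : ℕ} (a : Fin n → Fin d → ℤ)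
    (hprim : ∀ i, Finset.univ.gcd (a i) = 1)
    (D : Set ℝ) (hD : D ⊆ Set.Ioi (0 : ℝ)) (hDdense : Set.Ioi (0 : ℝ) ⊆ closure D)
    (b c : Fin n → ℝ) (P Q : Set (Fin d → ℝ))
    (hPdef : P = ⋂ i, {x : Fin d → ℝ | dotProd (fun j => (a i j : ℝ)) x ≤ b i})
    (hQdef : Q = ⋂ i, {x : Fin d → ℝ | dotProd (fun j => (a i j : ℝ)) x ≤ c i})
    (hPc : IsCompact P) (hPi : (interior P).Nonempty)
    (hQc : IsCompact Q) (hQi : (interior Q).Nonempty)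
    (hbmax : ∀ i, IsGreatest ((fun x => dotProd (fun j => (a i j : ℝ)) x) '' P) (b i))
    (hcmax : ∀ i, IsGreatest ((fun x => dotProd (fun j => (a i j : ℝ)) x) '' Q) (c i))
    (hehr : ∀ (w : Fin d → ℤ), ∀ s ∈ D,
      ehrhart (translateSet P (fun i => (w i : ℝ))) s =
      ehrhart (translateSet Q (fun i => (w i : ℝ))) s) :
    (∀ i, b i = c i) ∧ P = Q := by
  have hPQ : P = Q := by
    apply Set.Subset.antisymm
    · have h := ehr_aux D hD hDdense P Q hPc hQc hehr
      have hc : Convex ℝ P := hPdef ▸ conv_aux a b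
      calc P ⊆ closure P := subset_closure
        _ = closure (interior P) := (hc.closure_interior_eq_closure_of_nonempty_interior hPi).symm
        _ ⊆ Q := closure_minimal h hQc.isClosed
    · have h := ehr_aux D hD hDdense Q P hQc hPc (fun w s hs => (hehr w s hs).symm)
      have hc : Convex ℝ Q := hQdef ▸ conv_aux a c
      calc Q ⊆ closure Q := subset_closure
        _ = closure (interior Q) := (hc.closure_interior_eq_closure_of_nonempty_interior hQi).symm
        _ ⊆ P := closure_minimal h hPc.isClosed
  refine ⟨fun i => (hbmax i).unique ?_, hPQ⟩
  rw [hPQ]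
  exact hcmax i
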